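/- arXiv:2507.04228 — 7 statements merged into one kernel-verified Lean document; each statement's English description precedes it below -/
import Mathlib

section
/- Fix i ∈ {1,…,M}, a linear subspace Γ ⊆ E, and X, Y ∈ Γ. If δ ≥ 0 and the block-i upper RIP with constant δ holds at every Z ∈ Γ, i.e. (1/l)·Σ_{j=(i−1)l+1}^{il} ⟨A_j, Z⟩² ≤ (1+δ)·‖Z‖² for all Z ∈ Γ, then (1/(4(1+δ)))·‖P_Γ(∇f_i(Y) − ∇f_i(X))‖² ≤ f_i(Y) − f_i(X) − ⟨∇f_i(X), Y − X⟩. -/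
open RealInnerProductSpace

/-- For `X, Y` in a subspace `Γ` on which the block-`i` upper RIP with constant `δ ≥ 0` holds,
`(1/(4(1+δ))) ‖P_Γ(∇fᵢ(Y) - ∇fᵢ(X))‖² ≤ fᵢ(Y) - fᵢ(X) - ⟪∇fᵢ(X), Y - X⟫`. -/
theorem stmt_5 {E : Type*} [NormedAddCommGroup E] [InnerProductSpace ℝ E]
    [FiniteDimensional ℝ E]
    (m l M : ℕ) (hl : 1 ≤ l) (hM : 1 ≤ M) (hm : m = M * l)
    (A : ℕ → E) (y : ℕ → ℝ) (δ : ℝ) (hδ : 0 ≤ δ)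
    (f : ℕ → E → ℝ)
    (hf : ∀ i : ℕ, ∀ Z : E, f i Z =
      (1 / (l : ℝ)) * ∑ j ∈ Finset.Ioc ((i - 1) * l) (i * l), (y j - ⟪A j, Z⟫) ^ 2)
    (gradf : ℕ → E → E)
    (hgradf : ∀ i : ℕ, ∀ Z : E, gradf i Z =
      ((2 : ℝ) / (l : ℝ)) • ∑ j ∈ Finset.Ioc ((i - 1) * l) (i * l), (⟪A j, Z⟫ - y j) • A j)
    (i : ℕ) (hi : i ∈ Finset.Icc 1 M)
    (Γ : Submodule ℝ E) (X Y : E) (hX : X ∈ Γ) (hY : Y ∈ Γ)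
    (hRIP : ∀ Z ∈ Γ,
      (1 / (l : ℝ)) * ∑ j ∈ Finset.Ioc ((i - 1) * l) (i * l), ⟪A j, Z⟫ ^ 2 ≤
        (1 + δ) * ‖Z‖ ^ 2) :
    (1 / (4 * (1 + δ))) * ‖(Submodule.orthogonalProjectionOnto Γ (gradf i Y - gradf i X) : E)‖ ^ 2 ≤
      f i Y - f i X - ⟪gradf i X, Y - X⟫ := by
  set s := Finset.Ioc ((i - 1) * l) (i * l) with hs
  have hR : f i Y - f i X - ⟪gradf i X, Y - X⟫ = (1 / (l : ℝ)) * ∑ j ∈ s, ⟪A j, Y - X⟫ ^ 2 := by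
    rw [hf, hf, hgradf, real_inner_smul_left, sum_inner, ← hs, Finset.mul_sum, Finset.mul_sum,
      Finset.mul_sum, Finset.mul_sum, ← Finset.sum_sub_distrib, ← Finset.sum_sub_distrib]
    refine Finset.sum_congr rfl fun j _ => ?_
    rw [real_inner_smul_left, inner_sub_right]
    ring
  have hG : gradf i Y - gradf i X = ((2 : ℝ) / (l : ℝ)) • ∑ j ∈ s, ⟪A j, Y - X⟫ • A j := by
    rw [hgradf, hgradf, ← smul_sub, ← hs, ← Finset.sum_sub_distrib]
    congr 1
    refine Finset.sum_congr rfl fun j _ => ?_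
    rw [← sub_smul, inner_sub_right]
    congr 1
    ring
  rw [hR]
  set G := gradf i Y - gradf i X with hGdef
  set P : E := (Submodule.orthogonalProjectionOnto Γ G : E) with hP
  have hPm : P ∈ Γ := Submodule.coe_mem _
  have hPG : ‖P‖ ^ 2 = ⟪G, P⟫ := by
    rw [← real_inner_self_eq_norm_sq]
    have h2 := Submodule.starProjection_inner_eq_zero (K := Γ) G P hPm
    rw [inner_sub_left] at h2
    have h3 : Γ.starProjection G = P := rfl
    rw [h3] at h2
    linarith
  have hPs : ‖P‖ ^ 2 = 2 * ((1 / (l : ℝ)) * ∑ j ∈ s, ⟪A j, Y - X⟫ * ⟪A j, P⟫) := by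
    rw [hPG, hG, real_inner_smul_left, sum_inner]
    simp only [real_inner_smul_left]
    ring
  have hb := hRIP P hPm
  set t : ℝ := 1 / (2 * (1 + δ)) with ht
  have hsq : 0 ≤ (1 / (l : ℝ)) * ∑ j ∈ s, (⟪A j, Y - X⟫ - t * ⟪A j, P⟫) ^ 2 := by positivity
  have hexp : (1 / (l : ℝ)) * ∑ j ∈ s, (⟪A j, Y - X⟫ - t * ⟪A j, P⟫) ^ 2
      = (1 / (l : ℝ)) * ∑ j ∈ s, ⟪A j, Y - X⟫ ^ 2
        - t * (2 * ((1 / (l : ℝ)) * ∑ j ∈ s, ⟪A j, Y - X⟫ * ⟪A j, P⟫))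
        + t ^ 2 * ((1 / (l : ℝ)) * ∑ j ∈ s, ⟪A j, P⟫ ^ 2) := by
    simp only [Finset.mul_sum, ← Finset.sum_sub_distrib, ← Finset.sum_add_distrib]
    refine Finset.sum_congr rfl fun j _ => ?_
    ring
  rw [hexp, ← hPs] at hsq
  have hb2 := mul_le_mul_of_nonneg_left hb (sq_nonneg t)
  have hc : 1 / (4 * (1 + δ)) * ‖P‖ ^ 2 = t * ‖P‖ ^ 2 - t ^ 2 * ((1 + δ) * ‖P‖ ^ 2) := by
    have : 1 + δ ≠ 0 := by positivity
    rw [ht]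
    field_simp
    ring
  linarith
end

section
/- Fix i ∈ {1,…,M}, a linear subspace Γ ⊆ E, and X, Y ∈ Γ. If δ ≥ 0 and the block-i upper RIP with constant δ holds at every Z ∈ Γ, i.e. (1/l)·Σ_{j=(i−1)l+1}^{il} ⟨A_j, Z⟩² ≤ (1+δ)·‖Z‖² for all Z ∈ Γ, then ‖P_Γ(∇f_i(X) − ∇f_i(Y))‖² ≤ 2(1+δ)·⟨X − Y, ∇f_i(X) − ∇f_i(Y)⟩. -/
open RealInnerProductSpace

/-- For `X, Y` in a subspace `Γ` on which the block-`i` upper RIP with constant `δ ≥ 0` holds,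
`‖P_Γ(∇fᵢ(X) - ∇fᵢ(Y))‖² ≤ 2(1+δ) ⟪X - Y, ∇fᵢ(X) - ∇fᵢ(Y)⟫`. -/
theorem stmt_6 {E : Type*} [NormedAddCommGroup E] [InnerProductSpace ℝ E]
    [FiniteDimensional ℝ E]
    (m l M : ℕ) (hl : 1 ≤ l) (hM : 1 ≤ M) (hm : m = M * l)
    (A : ℕ → E) (y : ℕ → ℝ) (δ : ℝ) (hδ : 0 ≤ δ)
    (gradf : ℕ → E → E)
    (hgradf : ∀ i : ℕ, ∀ Z : E, gradf i Z =
      ((2 : ℝ) / (l : ℝ)) • ∑ j ∈ Finset.Ioc ((i - 1) * l) (i * l), (⟪A j, Z⟫ - y j) • A j)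
    (i : ℕ) (hi : i ∈ Finset.Icc 1 M)
    (Γ : Submodule ℝ E) (X Y : E) (hX : X ∈ Γ) (hY : Y ∈ Γ)
    (hRIP : ∀ Z ∈ Γ,
      (1 / (l : ℝ)) * ∑ j ∈ Finset.Ioc ((i - 1) * l) (i * l), ⟪A j, Z⟫ ^ 2 ≤
        (1 + δ) * ‖Z‖ ^ 2) :
    ‖(Submodule.orthogonalProjectionOnto Γ (gradf i X - gradf i Y) : E)‖ ^ 2 ≤
      2 * (1 + δ) * ⟪X - Y, gradf i X - gradf i Y⟫ := by
  have hg : gradf i X - gradf i Y = ((2 : ℝ) / (l : ℝ)) •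
      ∑ j ∈ Finset.Ioc ((i - 1) * l) (i * l), ⟪A j, X - Y⟫ • A j := by
    rw [hgradf, hgradf, ← smul_sub, ← Finset.sum_sub_distrib]
    congr 1
    refine Finset.sum_congr rfl fun j _ => ?_
    rw [← sub_smul, inner_sub_right]
    congr 1
    ring
  have hin : ∀ W : E, ⟪W, gradf i X - gradf i Y⟫ = ((2 : ℝ) / (l : ℝ)) *
      ∑ j ∈ Finset.Ioc ((i - 1) * l) (i * l), ⟪A j, X - Y⟫ * ⟪A j, W⟫ := by
    intro W
    rw [hg, inner_smul_right, inner_sum]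
    congr 1
    refine Finset.sum_congr rfl fun j _ => ?_
    rw [inner_smul_right, real_inner_comm W]
  have hP : ∀ g : E, ‖(Submodule.orthogonalProjectionOnto Γ g : E)‖ ^ 2
      = ⟪(Submodule.orthogonalProjectionOnto Γ g : E), g⟫ := by
    intro g
    have h0 := Submodule.inner_right_of_mem_orthogonal
      (Submodule.orthogonalProjectionOnto Γ g).2
      (Submodule.sub_starProjection_mem_orthogonal (K := Γ) g)
    rw [inner_sub_right, Submodule.starProjection_apply, real_inner_self_eq_norm_sq] at h0
    linarith
  have hPg := hP (gradf i X - gradf i Y)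
  have hmem := (Submodule.orthogonalProjectionOnto Γ (gradf i X - gradf i Y)).2
  generalize (Submodule.orthogonalProjectionOnto Γ (gradf i X - gradf i Y) : E) = P at *
  have hR := hRIP P hmem
  rw [hin] at hPg
  rw [hin]
  have hCS := Finset.sum_mul_sq_le_sq_mul_sq (Finset.Ioc ((i - 1) * l) (i * l))
    (fun j => ⟪A j, X - Y⟫) (fun j => ⟪A j, P⟫)
  have hsq : ∑ j ∈ Finset.Ioc ((i - 1) * l) (i * l), ⟪A j, X - Y⟫ * ⟪A j, X - Y⟫
      = ∑ j ∈ Finset.Ioc ((i - 1) * l) (i * l), ⟪A j, X - Y⟫ ^ 2 :=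
    Finset.sum_congr rfl fun j _ => (sq _).symm
  rw [hsq]
  have ha : 0 ≤ ∑ j ∈ Finset.Ioc ((i - 1) * l) (i * l), ⟪A j, X - Y⟫ ^ 2 :=
    Finset.sum_nonneg fun j _ => sq_nonneg _
  generalize ∑ j ∈ Finset.Ioc ((i - 1) * l) (i * l), ⟪A j, X - Y⟫ ^ 2 = a at *
  generalize ∑ j ∈ Finset.Ioc ((i - 1) * l) (i * l), ⟪A j, P⟫ ^ 2 = b at *
  generalize ∑ j ∈ Finset.Ioc ((i - 1) * l) (i * l), ⟪A j, X - Y⟫ * ⟪A j, P⟫ = c at *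
  have hlp : (0 : ℝ) ≤ 1 / (l : ℝ) := by positivity
  have e : (2 : ℝ) / (l : ℝ) = 2 * (1 / (l : ℝ)) := by ring
  rw [e] at hPg ⊢
  generalize 1 / (l : ℝ) = t at *
  have hp : 0 ≤ ‖P‖ ^ 2 := sq_nonneg _
  generalize ‖P‖ ^ 2 = p at *
  rcases hp.eq_or_lt with h0 | hpos
  · rw [← h0]; positivity
  · refine le_of_mul_le_mul_right ?_ hpos
    calc p * p = 4 * t ^ 2 * c ^ 2 := by rw [hPg]; ring
      _ ≤ 4 * t ^ 2 * (a * b) := by gcongr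
      _ = 4 * t * a * (t * b) := by ring
      _ ≤ 4 * t * a * ((1 + δ) * p) := by gcongr
      _ = 2 * (1 + δ) * (2 * t * a) * p := by ring
end

section
/- Fix i ∈ {1,…,M}, a linear subspace Γ ⊆ E, and X, Y ∈ Γ. If δ ≥ 0 and the block-i upper RIP with constant δ holds at every Z ∈ Γ, i.e. (1/l)·Σ_{j=(i−1)l+1}^{il} ⟨A_j, Z⟩² ≤ (1+δ)·‖Z‖² for all Z ∈ Γ, then ‖P_Γ(∇f_i(X) − ∇f_i(Y))‖ ≤ 2(1+δ)·‖X − Y‖. -/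
open RealInnerProductSpace

/-- For `X, Y` in a subspace `Γ` on which the block-`i` upper RIP with constant `δ ≥ 0` holds,
`‖P_Γ(∇fᵢ(X) - ∇fᵢ(Y))‖ ≤ 2(1+δ)‖X - Y‖`. -/
theorem stmt_7 {E : Type*} [NormedAddCommGroup E] [InnerProductSpace ℝ E]
    [FiniteDimensional ℝ E]
    (m l M : ℕ) (hl : 1 ≤ l) (hM : 1 ≤ M) (hm : m = M * l)
    (A : ℕ → E) (y : ℕ → ℝ) (δ : ℝ) (hδ : 0 ≤ δ)
    (gradf : ℕ → E → E)
    (hgradf : ∀ i : ℕ, ∀ Z : E, gradf i Z =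
      ((2 : ℝ) / (l : ℝ)) • ∑ j ∈ Finset.Ioc ((i - 1) * l) (i * l), (⟪A j, Z⟫ - y j) • A j)
    (i : ℕ) (hi : i ∈ Finset.Icc 1 M)
    (Γ : Submodule ℝ E) (X Y : E) (hX : X ∈ Γ) (hY : Y ∈ Γ)
    (hRIP : ∀ Z ∈ Γ,
      (1 / (l : ℝ)) * ∑ j ∈ Finset.Ioc ((i - 1) * l) (i * l), ⟪A j, Z⟫ ^ 2 ≤
        (1 + δ) * ‖Z‖ ^ 2) :
    ‖(Submodule.orthogonalProjectionOnto Γ (gradf i X - gradf i Y) : E)‖ ≤ 2 * (1 + δ) * ‖X - Y‖ := by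
  have hD : X - Y ∈ Γ := Γ.sub_mem hX hY
  set s := Finset.Ioc ((i - 1) * l) (i * l) with hs
  set P : E := (Submodule.orthogonalProjectionOnto Γ (gradf i X - gradf i Y) : E) with hPdef
  have hP : P ∈ Γ := Submodule.coe_mem _
  have hG : gradf i X - gradf i Y = ((2 : ℝ) / (l : ℝ)) • ∑ j ∈ s, ⟪A j, X - Y⟫ • A j := by
    rw [hgradf, hgradf, ← smul_sub, ← Finset.sum_sub_distrib]
    congr 1
    refine Finset.sum_congr rfl fun j _ => ?_
    rw [← sub_smul, inner_sub_right]
    congr 1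
    ring
  have h1 : ⟪gradf i X - gradf i Y, P⟫ = ‖P‖ ^ 2 := by
    have h0 : ⟪gradf i X - gradf i Y - P, P⟫ = 0 :=
      Submodule.starProjection_inner_eq_zero (K := Γ) (gradf i X - gradf i Y) P hP
    rw [inner_sub_left, real_inner_self_eq_norm_sq] at h0
    linarith
  have h2 : ⟪gradf i X - gradf i Y, P⟫
      = 2 * ((1 / (l : ℝ)) * ∑ j ∈ s, ⟪A j, X - Y⟫ * ⟪A j, P⟫) := by
    rw [hG, real_inner_smul_left, sum_inner]
    simp only [real_inner_smul_left]
    ring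
  have hCS := Finset.sum_mul_sq_le_sq_mul_sq s (fun j => ⟪A j, X - Y⟫) (fun j => ⟪A j, P⟫)
  have hRD := hRIP _ hD
  have hRP := hRIP _ hP
  have hl0 : (0 : ℝ) ≤ 1 / (l : ℝ) := by positivity
  have hS1 : 0 ≤ (1 / (l : ℝ)) * ∑ j ∈ s, ⟪A j, P⟫ ^ 2 := by positivity
  have h3 : ((1 / (l : ℝ)) * ∑ j ∈ s, ⟪A j, X - Y⟫ * ⟪A j, P⟫) ^ 2
      ≤ ((1 + δ) * ‖X - Y‖ ^ 2) * ((1 + δ) * ‖P‖ ^ 2) := by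
    calc _ = (1 / (l : ℝ)) ^ 2 * (∑ j ∈ s, ⟪A j, X - Y⟫ * ⟪A j, P⟫) ^ 2 := by ring
      _ ≤ (1 / (l : ℝ)) ^ 2 * ((∑ j ∈ s, ⟪A j, X - Y⟫ ^ 2) * ∑ j ∈ s, ⟪A j, P⟫ ^ 2) :=
        mul_le_mul_of_nonneg_left hCS (by positivity)
      _ = ((1 / (l : ℝ)) * ∑ j ∈ s, ⟪A j, X - Y⟫ ^ 2)
          * ((1 / (l : ℝ)) * ∑ j ∈ s, ⟪A j, P⟫ ^ 2) := by ring
      _ ≤ _ := mul_le_mul hRD hRP hS1 (by positivity)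
  have h4 : (‖P‖ ^ 2) ^ 2 ≤ (2 * (1 + δ) * ‖X - Y‖ * ‖P‖) ^ 2 := by
    rw [← h1, h2]
    nlinarith [h3]
  have h5 : ‖P‖ ^ 2 ≤ 2 * (1 + δ) * ‖X - Y‖ * ‖P‖ :=
    (sq_le_sq₀ (by positivity) (by positivity)).1 h4
  rcases (norm_nonneg P).eq_or_lt with h | h
  · rw [← h]; positivity
  · rw [pow_two] at h5
    exact le_of_mul_le_mul_right h5 h
end

section
/- Let Γ ⊆ E be a linear subspace and X, Y ∈ Γ. Suppose 0 ≤ δ < 1, the upper RIP with constant δ holds at every Z ∈ Γ (i.e. (1/m)·Σ_{i=1}^{m} ⟨A_i, Z⟩² ≤ (1+δ)·‖Z‖² for all Z ∈ Γ), the lower RIP with constant δ holds at X − Y (i.e. (1−δ)·‖X−Y‖² ≤ (1/m)·Σ_{i=1}^{m} ⟨A_i, X−Y⟩²), and 0 ≤ η ≤ 1/(1+δ). Then ‖X − Y − η·P_Γ(∇F(X) − ∇F(Y))‖² ≤ (1 + η²·δ⁺·δ⁻ − 2η·δ⁻)·‖X − Y‖², where δ⁻ = 2(1−δ) and δ⁺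 = 2(1+δ). -/
open RealInnerProductSpace

/-- For `X, Y` in a subspace `Γ` on which the upper RIP with constant `0 ≤ δ < 1` holds,
if the lower RIP holds at `X - Y` and `0 ≤ η ≤ 1/(1+δ)`, then
`‖X - Y - η P_Γ(∇F(X) - ∇F(Y))‖² ≤ (1 + η²δ⁺δ⁻ - 2ηδ⁻)‖X - Y‖²`,
where `δ⁻ = 2(1-δ)` and `δ⁺ = 2(1+δ)`. -/
theorem stmt_8 {E : Type*} [NormedAddCommGroup E] [InnerProductSpace ℝ E]
    [FiniteDimensional ℝ E]
    (m : ℕ) (A : ℕ → E) (y : ℕ → ℝ) (δ η : ℝ)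
    (hδ0 : 0 ≤ δ) (hδ1 : δ < 1) (hη0 : 0 ≤ η) (hη1 : η ≤ 1 / (1 + δ))
    (gradF : E → E)
    (hgradF : ∀ Z : E, gradF Z =
      ((2 : ℝ) / (m : ℝ)) • ∑ i ∈ Finset.Icc 1 m, (⟪A i, Z⟫ - y i) • A i)
    (Γ : Submodule ℝ E) (X Y : E) (hX : X ∈ Γ) (hY : Y ∈ Γ)
    (hupper : ∀ Z ∈ Γ,
      (1 / (m : ℝ)) * ∑ i ∈ Finset.Icc 1 m, ⟪A i, Z⟫ ^ 2 ≤ (1 + δ) * ‖Z‖ ^ 2)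
    (hlower : (1 - δ) * ‖X - Y‖ ^ 2 ≤
      (1 / (m : ℝ)) * ∑ i ∈ Finset.Icc 1 m, ⟪A i, X - Y⟫ ^ 2)
    (δm δp : ℝ) (hδm : δm = 2 * (1 - δ)) (hδp : δp = 2 * (1 + δ)) :
    ‖X - Y - η • (Submodule.orthogonalProjectionOnto Γ (gradF X - gradF Y) : E)‖ ^ 2 ≤
      (1 + η ^ 2 * δp * δm - 2 * η * δm) * ‖X - Y‖ ^ 2 := by
  have hd : (0:ℝ) < 1 + δ := by linarith
  have hdiff : gradF X - gradF Y =
      ((2 : ℝ) / (m : ℝ)) • ∑ i ∈ Finset.Icc 1 m, ⟪A i, X - Y⟫ • A i := by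
    rw [hgradF, hgradF, ← smul_sub, ← Finset.sum_sub_distrib]
    congr 1
    refine Finset.sum_congr rfl fun i _ => ?_
    rw [← sub_smul, inner_sub_right]
    congr 1
    ring
  have hinner : ∀ Z ∈ Γ,
      ⟪Z, (Submodule.orthogonalProjectionOnto Γ (gradF X - gradF Y) : E)⟫ =
        (2 / (m : ℝ)) * ∑ i ∈ Finset.Icc 1 m, ⟪A i, X - Y⟫ * ⟪A i, Z⟫ := by
    intro Z hZ
    have h1 : ⟪Z, (Submodule.orthogonalProjectionOnto Γ (gradF X - gradF Y) : E)⟫ =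
        ⟪Z, gradF X - gradF Y⟫ := by
      have h2 := Submodule.inner_orthogonalProjectionOnto_eq_of_mem_left
        (⟨Z, hZ⟩ : Γ) (gradF X - gradF Y)
      simpa using h2
    rw [h1, hdiff, inner_smul_right, inner_sum]
    congr 1
    refine Finset.sum_congr rfl fun i _ => ?_
    rw [inner_smul_right, real_inner_comm (A i) Z]
  set G : E := (Submodule.orthogonalProjectionOnto Γ (gradF X - gradF Y) : E) with hG
  have hGm : G ∈ Γ := Submodule.coe_mem _
  have hDm : X - Y ∈ Γ := Γ.sub_mem hX hY
  have hGG := hinner G hGm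
  have hDG := hinner (X - Y) hDm
  have hUG := hupper G hGm
  set q : ℝ := (1 / (m : ℝ)) * ∑ i ∈ Finset.Icc 1 m, ⟪A i, X - Y⟫ ^ 2 with hq
  have hDG' : ⟪X - Y, G⟫ = 2 * q := by
    rw [hDG, hq]
    simp only [pow_two]
    ring
  have hm : (0 : ℝ) ≤ 1 / (m : ℝ) := by positivity
  have hcs : 2 * (1 + δ) * ⟪G, G⟫ ≤ (2 * (1 + δ)) ^ 2 * q +
      (1 / (m : ℝ)) * ∑ i ∈ Finset.Icc 1 m, ⟪A i, G⟫ ^ 2 := by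
    have e : (2 * (1 + δ)) ^ 2 * q + (1 / (m : ℝ)) * ∑ i ∈ Finset.Icc 1 m, ⟪A i, G⟫ ^ 2
        - 2 * (1 + δ) * ⟪G, G⟫ =
        (1 / (m : ℝ)) * ∑ i ∈ Finset.Icc 1 m,
          (2 * (1 + δ) * ⟪A i, X - Y⟫ - ⟪A i, G⟫) ^ 2 := by
      have e2 : ∑ i ∈ Finset.Icc 1 m, (2 * (1 + δ) * ⟪A i, X - Y⟫ - ⟪A i, G⟫) ^ 2 =
          (2 * (1 + δ)) ^ 2 * ∑ i ∈ Finset.Icc 1 m, ⟪A i, X - Y⟫ ^ 2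
          - 4 * (1 + δ) * ∑ i ∈ Finset.Icc 1 m, ⟪A i, X - Y⟫ * ⟪A i, G⟫
          + ∑ i ∈ Finset.Icc 1 m, ⟪A i, G⟫ ^ 2 := by
        rw [Finset.mul_sum, Finset.mul_sum, ← Finset.sum_sub_distrib, ← Finset.sum_add_distrib]
        refine Finset.sum_congr rfl fun i _ => ?_
        ring
      rw [e2, hGG, hq]
      ring
    have : 0 ≤ (1 / (m : ℝ)) * ∑ i ∈ Finset.Icc 1 m,
          (2 * (1 + δ) * ⟪A i, X - Y⟫ - ⟪A i, G⟫) ^ 2 :=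
      mul_nonneg hm (Finset.sum_nonneg fun i _ => sq_nonneg _)
    linarith
  rw [real_inner_self_eq_norm_sq] at hcs
  have hGn : ‖G‖ ^ 2 ≤ 4 * (1 + δ) * q := by
    have : (1 + δ) * ‖G‖ ^ 2 ≤ (1 + δ) * (4 * (1 + δ) * q) := by linarith
    exact le_of_mul_le_mul_left this hd
  have hη : η * (1 + δ) ≤ 1 := (le_div_iff₀ hd).1 hη1
  rw [norm_sub_sq_real, inner_smul_right, hDG', norm_smul, mul_pow, Real.norm_eq_abs, sq_abs,
    hδm, hδp]
  have k1 := mul_le_mul_of_nonneg_left hGn (sq_nonneg η)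
  have k2 := mul_le_mul_of_nonneg_left hlower
    (mul_nonneg hη0 (sub_nonneg.2 hη))
  linarith
end

section
/- Fix i ∈ {1,…,M}, a linear subspace Γ ⊆ E, and X, Y ∈ Γ. Suppose 0 ≤ δ < 1, the block-i upper RIP with constant δ holds at every Z ∈ Γ (i.e. (1/l)·Σ_{j=(i−1)l+1}^{il} ⟨A_j, Z⟩² ≤ (1+δ)·‖Z‖² for all Z ∈ Γ), the block-i lower RIP with constant δ holds at X − Y (i.e. (1−δ)·‖X−Y‖² ≤ (1/l)·Σ_{j=(i−1)l+1}^{il} ⟨A_j, X−Y⟩²), and 0 ≤ η ≤ 1/(1+δ). Then ‖X − Y − η·P_Γ(∇f_i(X) − ∇f_i(Y))‖² ≤ (1 + η²·δ⁺·δ⁻ − 2η·δ⁻)·‖X − Y‖², where δ⁻ = 2(1−δ) and δ⁺ = 2(1+δ). -/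
open RealInnerProductSpace

/-- Block version: for `X, Y` in a subspace `Γ` on which the block-`i` upper RIP with
constant `0 ≤ δ < 1` holds, if the block-`i` lower RIP holds at `X - Y` and
`0 ≤ η ≤ 1/(1+δ)`, then
`‖X - Y - η P_Γ(∇fᵢ(X) - ∇fᵢ(Y))‖² ≤ (1 + η²δ⁺δ⁻ - 2ηδ⁻)‖X - Y‖²`,
where `δ⁻ = 2(1-δ)` and `δ⁺ = 2(1+δ)`. -/
theorem stmt_9 {E : Type*} [NormedAddCommGroup E] [InnerProductSpace ℝ E]
    [FiniteDimensional ℝ E]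
    (m l M : ℕ) (hl : 1 ≤ l) (hM : 1 ≤ M) (hm : m = M * l)
    (A : ℕ → E) (y : ℕ → ℝ) (δ η : ℝ)
    (hδ0 : 0 ≤ δ) (hδ1 : δ < 1) (hη0 : 0 ≤ η) (hη1 : η ≤ 1 / (1 + δ))
    (gradf : ℕ → E → E)
    (hgradf : ∀ i : ℕ, ∀ Z : E, gradf i Z =
      ((2 : ℝ) / (l : ℝ)) • ∑ j ∈ Finset.Ioc ((i - 1) * l) (i * l), (⟪A j, Z⟫ - y j) • A j)
    (i : ℕ) (hi : i ∈ Finset.Icc 1 M)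
    (Γ : Submodule ℝ E) (X Y : E) (hX : X ∈ Γ) (hY : Y ∈ Γ)
    (hupper : ∀ Z ∈ Γ,
      (1 / (l : ℝ)) * ∑ j ∈ Finset.Ioc ((i - 1) * l) (i * l), ⟪A j, Z⟫ ^ 2 ≤
        (1 + δ) * ‖Z‖ ^ 2)
    (hlower : (1 - δ) * ‖X - Y‖ ^ 2 ≤
      (1 / (l : ℝ)) * ∑ j ∈ Finset.Ioc ((i - 1) * l) (i * l), ⟪A j, X - Y⟫ ^ 2)
    (δm δp : ℝ) (hδm : δm = 2 * (1 - δ)) (hδp : δp = 2 * (1 + δ)) :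
    ‖X - Y - η • (Submodule.orthogonalProjectionOnto Γ (gradf i X - gradf i Y) : E)‖ ^ 2 ≤
      (1 + η ^ 2 * δp * δm - 2 * η * δm) * ‖X - Y‖ ^ 2 := by
  have hl0 : (0 : ℝ) < l := by exact_mod_cast hl
  have hG : gradf i X - gradf i Y = ((2 : ℝ) / (l : ℝ)) •
      ∑ j ∈ Finset.Ioc ((i - 1) * l) (i * l), ⟪A j, X - Y⟫ • A j := by
    rw [hgradf, hgradf, ← smul_sub, ← Finset.sum_sub_distrib]
    congr 1
    refine Finset.sum_congr rfl fun j _ => ?_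
    rw [← sub_smul, inner_sub_right]
    congr 1
    ring
  have hD : X - Y ∈ Γ := Γ.sub_mem hX hY
  rw [hG]
  generalize X - Y = D at *
  generalize Finset.Ioc ((i - 1) * l) (i * l) = S at *
  have key : ∀ Z ∈ Γ, ⟪Z, (Submodule.orthogonalProjectionOnto Γ (((2 : ℝ) / (l : ℝ)) •
      ∑ j ∈ S, ⟪A j, D⟫ • A j) : E)⟫ = (2 / (l : ℝ)) * ∑ j ∈ S, ⟪A j, D⟫ * ⟪A j, Z⟫ := by
    intro Z hZ
    have h := Submodule.inner_orthogonalProjectionOnto_eq_of_mem_left (K := Γ) ⟨Z, hZ⟩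
      (((2 : ℝ) / (l : ℝ)) • ∑ j ∈ S, ⟪A j, D⟫ • A j)
    rw [Submodule.coe_inner] at h
    refine h.trans ?_
    rw [inner_smul_right, inner_sum]
    congr 1
    refine Finset.sum_congr rfl fun j _ => ?_
    rw [inner_smul_right, real_inner_comm Z (A j)]
  have hPm := (Submodule.orthogonalProjectionOnto Γ (((2 : ℝ) / (l : ℝ)) •
      ∑ j ∈ S, ⟪A j, D⟫ • A j)).2
  generalize ((Submodule.orthogonalProjectionOnto Γ (((2 : ℝ) / (l : ℝ)) •
      ∑ j ∈ S, ⟪A j, D⟫ • A j)) : E) = P at *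
  have k1 := key D hD
  have k2 := key P hPm
  have hu := hupper P hPm
  rw [real_inner_self_eq_norm_sq] at k2
  have hsq : 0 ≤ (1 / (l : ℝ)) * ∑ j ∈ S, (2 * (1 + δ) * ⟪A j, D⟫ - ⟪A j, P⟫) ^ 2 := by positivity
  have hexp : (1 / (l : ℝ)) * ∑ j ∈ S, (2 * (1 + δ) * ⟪A j, D⟫ - ⟪A j, P⟫) ^ 2
      = 4 * (1 + δ) ^ 2 * ((1 / (l : ℝ)) * ∑ j ∈ S, ⟪A j, D⟫ ^ 2)
        - 2 * (1 + δ) * ((2 / (l : ℝ)) * ∑ j ∈ S, ⟪A j, D⟫ * ⟪A j, P⟫)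
        + (1 / (l : ℝ)) * ∑ j ∈ S, ⟪A j, P⟫ ^ 2 := by
    simp only [Finset.mul_sum]
    rw [← Finset.sum_sub_distrib, ← Finset.sum_add_distrib]
    refine Finset.sum_congr rfl fun j _ => ?_
    ring
  have k1' : ⟪D, P⟫ = 2 * ((1 / (l : ℝ)) * ∑ j ∈ S, ⟪A j, D⟫ ^ 2) := by
    rw [k1]
    simp only [← sq]
    ring
  rw [hexp, ← k2] at hsq
  generalize (1 / (l : ℝ)) * ∑ j ∈ S, ⟪A j, D⟫ ^ 2 = q at *
  generalize (1 / (l : ℝ)) * ∑ j ∈ S, ⟪A j, P⟫ ^ 2 = r at *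
  have hpos : 0 < 1 + δ := by linarith
  have hP : ‖P‖ ^ 2 ≤ 4 * (1 + δ) * q := by
    refine le_of_mul_le_mul_left ?_ hpos
    nlinarith
  have hη : 0 ≤ 1 - η * (1 + δ) := by
    rw [le_div_iff₀ hpos] at hη1
    linarith
  rw [norm_sub_sq_real, norm_smul, inner_smul_right, k1', mul_pow, Real.norm_eq_abs, sq_abs,
    hδm, hδp]
  have e1 := mul_le_mul_of_nonneg_left hP (sq_nonneg η)
  have e2 := mul_le_mul_of_nonneg_left hlower (mul_nonneg hη0 hη)
  nlinarith
end

section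
/- Let Γ ⊆ E be a linear subspace and X, Y ∈ Γ. Suppose 0 ≤ δ < 1, for every i ∈ {1,…,M} the block-i upper RIP with constant δ holds at every Z ∈ Γ (i.e. (1/l)·Σ_{j=(i−1)l+1}^{il} ⟨A_j, Z⟩² ≤ (1+δ)·‖Z‖² for all Z ∈ Γ), the lower RIP with constant δ holds at X − Y (i.e. (1−δ)·‖X−Y‖² ≤ (1/m)·Σ_{i=1}^{m} ⟨A_i, X−Y⟩²), and 0 ≤ η ≤ 1/(1+δ). Then the uniform average over i ∈ {1,…,M} satisfies (1/M)·Σ_{i=1}^{M} ‖X − Y − η·P_Γ(∇f_i(X) − ∇f_i(Y))‖ ≤ ρ·‖X − Y‖, where ρ = √(1 + η²·δ⁺·δ⁻ − 2η·δ⁻), δ⁻ = 2(1−δ) and δ⁺ = 2(1+δ). -/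
open RealInnerProductSpace

theorem block_sum_aux (l : ℕ) (f : ℕ → ℝ) (M : ℕ) :
    ∑ i ∈ Finset.Icc 1 M, ∑ j ∈ Finset.Ioc ((i - 1) * l) (i * l), f j =
      ∑ j ∈ Finset.Icc 1 (M * l), f j := by
  have hI : ∀ n : ℕ, Finset.Icc 1 n = Finset.Ioc 0 n := by
    intro n; ext x; simp [Nat.succ_le_iff]
  induction M with
  | zero => simp
  | succ k ih =>
    rw [Finset.sum_Icc_succ_top (by omega), ih, hI, hI, Nat.add_sub_cancel]
    exact Finset.sum_Ioc_consecutive f (Nat.zero_le _) (Nat.mul_le_mul_right l (Nat.le_succ k))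

theorem block_step_aux {E : Type*} [NormedAddCommGroup E] [InnerProductSpace ℝ E]
    [FiniteDimensional ℝ E] (s : Finset ℕ) (A : ℕ → E) (c δ η : ℝ) (hc : 0 ≤ c) (hδ0 : 0 ≤ δ)
    (Γ : Submodule ℝ E) (W D : E) (hW : W ∈ Γ)
    (hD : D = (2 * c) • ∑ j ∈ s, ⟪A j, W⟫ • A j)
    (hupper : ∀ Z ∈ Γ, c * ∑ j ∈ s, ⟪A j, Z⟫ ^ 2 ≤ (1 + δ) * ‖Z‖ ^ 2) :
    ‖W - η • (Submodule.orthogonalProjection Γ D : E)‖ ^ 2 ≤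
      ‖W‖ ^ 2 - 4 * η * (1 - η * (1 + δ)) * (c * ∑ j ∈ s, ⟪A j, W⟫ ^ 2) := by
  obtain ⟨G, hG⟩ : ∃ G : E, G = (Submodule.orthogonalProjection Γ D : E) := ⟨_, rfl⟩
  have hGΓ : G ∈ Γ := by rw [hG]; exact Submodule.coe_mem _
  have hin : ∀ Z ∈ Γ, ⟪Z, G⟫ = 2 * (c * ∑ j ∈ s, ⟪A j, W⟫ * ⟪A j, Z⟫) := by
    intro Z hZ
    have h1 : ⟪Z, G⟫ = ⟪Z, D⟫ := by
      have h := Submodule.inner_right_of_mem_orthogonal hZ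
        (Submodule.sub_starProjection_mem_orthogonal (K := Γ) D)
      rw [inner_sub_right, Submodule.starProjection_apply, ← hG] at h
      linarith
    rw [h1, hD, inner_smul_right, inner_sum, mul_assoc]
    congr 2
    refine Finset.sum_congr rfl fun j _ => ?_
    rw [inner_smul_right, real_inner_comm (A j) Z]
  rw [← hG, norm_sub_sq_real, inner_smul_right, norm_smul, mul_pow, Real.norm_eq_abs, sq_abs]
  have hWG := hin W hW
  have hGG := hin G hGΓ
  rw [real_inner_self_eq_norm_sq] at hGG
  have hu := hupper G hGΓ
  have hsq : 0 ≤ c * ∑ j ∈ s, (2 * (1 + δ) * ⟪A j, W⟫ - ⟪A j, G⟫) ^ 2 :=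
    mul_nonneg hc (Finset.sum_nonneg fun j _ => sq_nonneg _)
  have hexp : c * ∑ j ∈ s, (2 * (1 + δ) * ⟪A j, W⟫ - ⟪A j, G⟫) ^ 2 =
      4 * (1 + δ) ^ 2 * (c * ∑ j ∈ s, ⟪A j, W⟫ ^ 2)
      - 4 * (1 + δ) * (c * ∑ j ∈ s, ⟪A j, W⟫ * ⟪A j, G⟫)
      + c * ∑ j ∈ s, ⟪A j, G⟫ ^ 2 := by
    simp only [Finset.mul_sum]
    rw [← Finset.sum_sub_distrib, ← Finset.sum_add_distrib]
    exact Finset.sum_congr rfl fun j _ => by ring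
  have hWW : ∑ j ∈ s, ⟪A j, W⟫ * ⟪A j, W⟫ = ∑ j ∈ s, ⟪A j, W⟫ ^ 2 :=
    Finset.sum_congr rfl fun j _ => by ring
  rw [hWW] at hWG
  rw [hexp] at hsq
  rw [hWG]
  generalize c * ∑ j ∈ s, ⟪A j, W⟫ ^ 2 = q at *
  generalize c * ∑ j ∈ s, ⟪A j, W⟫ * ⟪A j, G⟫ = r at *
  generalize c * ∑ j ∈ s, ⟪A j, G⟫ ^ 2 = t at *
  have h1 : (1 + δ) * ‖G‖ ^ 2 ≤ (1 + δ) * (4 * (1 + δ) * q) := by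
    rw [hGG] at hu ⊢; nlinarith
  have h2 : ‖G‖ ^ 2 ≤ 4 * (1 + δ) * q := le_of_mul_le_mul_left h1 (by linarith)
  have h3 := mul_le_mul_of_nonneg_left h2 (sq_nonneg η)
  linarith

/-- Averaged contraction: for `X, Y` in a subspace `Γ` on which every block-`i` upper RIP
with constant `0 ≤ δ < 1` holds, if the (full) lower RIP holds at `X - Y` and
`0 ≤ η ≤ 1/(1+δ)`, then the uniform average over the block index satisfies
`(1/M) ∑_{i=1}^M ‖X - Y - η P_Γ(∇fᵢ(X) - ∇fᵢ(Y))‖ ≤ ρ ‖X - Y‖`, where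
`ρ = √(1 + η²δ⁺δ⁻ - 2ηδ⁻)`, `δ⁻ = 2(1-δ)`, `δ⁺ = 2(1+δ)`. -/
theorem stmt_10 {E : Type*} [NormedAddCommGroup E] [InnerProductSpace ℝ E]
    [FiniteDimensional ℝ E]
    (m l M : ℕ) (hl : 1 ≤ l) (hM : 1 ≤ M) (hm : m = M * l)
    (A : ℕ → E) (y : ℕ → ℝ) (δ η : ℝ)
    (hδ0 : 0 ≤ δ) (hδ1 : δ < 1) (hη0 : 0 ≤ η) (hη1 : η ≤ 1 / (1 + δ))
    (gradf : ℕ → E → E)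
    (hgradf : ∀ i : ℕ, ∀ Z : E, gradf i Z =
      ((2 : ℝ) / (l : ℝ)) • ∑ j ∈ Finset.Ioc ((i - 1) * l) (i * l), (⟪A j, Z⟫ - y j) • A j)
    (Γ : Submodule ℝ E) (X Y : E) (hX : X ∈ Γ) (hY : Y ∈ Γ)
    (hupper : ∀ i ∈ Finset.Icc 1 M, ∀ Z ∈ Γ,
      (1 / (l : ℝ)) * ∑ j ∈ Finset.Ioc ((i - 1) * l) (i * l), ⟪A j, Z⟫ ^ 2 ≤
        (1 + δ) * ‖Z‖ ^ 2)
    (hlower : (1 - δ) * ‖X - Y‖ ^ 2 ≤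
      (1 / (m : ℝ)) * ∑ i ∈ Finset.Icc 1 m, ⟪A i, X - Y⟫ ^ 2)
    (δm δp ρ : ℝ) (hδm : δm = 2 * (1 - δ)) (hδp : δp = 2 * (1 + δ))
    (hρ : ρ = Real.sqrt (1 + η ^ 2 * δp * δm - 2 * η * δm)) :
    (1 / (M : ℝ)) * ∑ i ∈ Finset.Icc 1 M,
        ‖X - Y - η • (Submodule.orthogonalProjection Γ (gradf i X - gradf i Y) : E)‖ ≤
      ρ * ‖X - Y‖ := by
  subst hδm hδp hρ hm
  have hl' : (0 : ℝ) < l := by exact_mod_cast hl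
  have hM' : (0 : ℝ) < M := by exact_mod_cast hM
  have hstep : ∀ i ∈ Finset.Icc 1 M,
      ‖X - Y - η • (Submodule.orthogonalProjection Γ (gradf i X - gradf i Y) : E)‖ ^ 2 ≤
      ‖X - Y‖ ^ 2 - 4 * η * (1 - η * (1 + δ)) *
        (1 / (l : ℝ) * ∑ j ∈ Finset.Ioc ((i - 1) * l) (i * l), ⟪A j, X - Y⟫ ^ 2) := by
    intro i hi
    refine block_step_aux _ A (1 / (l : ℝ)) δ η (by positivity) hδ0 Γ _ _ (Γ.sub_mem hX hY) ?_
      (hupper i hi)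
    rw [hgradf, hgradf, ← smul_sub, ← Finset.sum_sub_distrib, mul_one_div]
    congr 1
    refine Finset.sum_congr rfl fun j _ => ?_
    rw [← sub_smul, inner_sub_right]
    congr 1
    ring
  have hsum := Finset.sum_le_sum hstep
  rw [Finset.sum_sub_distrib, ← Finset.mul_sum, ← Finset.mul_sum, block_sum_aux] at hsum
  simp only [Finset.sum_const, Nat.card_Icc, Nat.add_sub_cancel, nsmul_eq_mul] at hsum
  have hcs := sq_sum_le_card_mul_sum_sq (s := Finset.Icc 1 M) (f := fun i =>
    ‖X - Y - η • (Submodule.orthogonalProjection Γ (gradf i X - gradf i Y) : E)‖)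
  simp only [Nat.card_Icc, Nat.add_sub_cancel] at hcs
  have hlow : (M : ℝ) * ((1 - δ) * ‖X - Y‖ ^ 2) ≤
      1 / (l : ℝ) * ∑ j ∈ Finset.Icc 1 (M * l), ⟪A j, X - Y⟫ ^ 2 := by
    refine (mul_le_mul_of_nonneg_left hlower hM'.le).trans (le_of_eq ?_)
    push_cast
    field_simp
  have hk : 0 ≤ 4 * η * (1 - η * (1 + δ)) := by
    have : η * (1 + δ) ≤ 1 := (le_div_iff₀ (by linarith)).1 hη1
    exact mul_nonneg (by linarith) (by linarith)
  have h4 := mul_le_mul_of_nonneg_left hlow hk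
  generalize ∑ i ∈ Finset.Icc 1 M,
    ‖X - Y - η • (Submodule.orthogonalProjection Γ (gradf i X - gradf i Y) : E)‖ ^ 2 = S2 at *
  generalize ∑ i ∈ Finset.Icc 1 M,
    ‖X - Y - η • (Submodule.orthogonalProjection Γ (gradf i X - gradf i Y) : E)‖ = S at *
  have h5 : S2 ≤ M * ((1 + η ^ 2 * (2 * (1 + δ)) * (2 * (1 - δ)) - 2 * η * (2 * (1 - δ))) *
      ‖X - Y‖ ^ 2) := by linarith
  have h6 : (1 / (M : ℝ) * S) ^ 2 ≤
      (1 + η ^ 2 * (2 * (1 + δ)) * (2 * (1 - δ)) - 2 * η * (2 * (1 - δ))) * ‖X - Y‖ ^ 2 := by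
    have h7 := hcs.trans (mul_le_mul_of_nonneg_left h5 hM'.le)
    rw [one_div_mul_eq_div, div_pow, div_le_iff₀ (by positivity)]
    linarith
  refine (Real.le_sqrt_of_sq_le h6).trans (le_of_eq ?_)
  rw [Real.sqrt_mul' _ (sq_nonneg _), Real.sqrt_sq (norm_nonneg _)]
end

section
/- Let X_t, X̃, X* ∈ E with y_j = ⟨A_j, X*⟩ for all j ∈ {1,…,m}, let 0 ≤ δ < 1 and 0 ≤ η ≤ 1/(1+δ). Suppose that for each i ∈ {1,…,M} there are a point X₊ⁱ ∈ E and linear subspaces Γ_i, Γ_i' ⊆ E such that: X₊ⁱ, X_t, X* ∈ Γ_i; X₊ⁱ, X̃, X* ∈ Γ_i'; for every Z ∈ Γ_i and every Z ∈ Γ_i', both (1−δ)·‖Z‖² ≤ (1/m)·Σ_{j=1}^{m} ⟨A_j, Z⟩² ≤ (1+δ)·‖Z‖² and (1−δ)·‖Z‖² ≤ (1/l)·Σ_{j=(i−1)l+1}^{il} ⟨A_j, Z⟩² ≤ (1+δ)·‖Z‖² hold; and ‖X₊ⁱ − W_i‖ ≤ ‖X* − W_i‖, where W_i = X_t − η·(∇f_i(X_t)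 − ∇f_i(X̃) + ∇F(X̃)). Then (1/M)·Σ_{i=1}^{M} ‖X₊ⁱ − X*‖ ≤ θ·‖X_t − X*‖ + 2θ·‖X̃ − X*‖, where θ = 2ρ, ρ = √(1 + η²·δ⁺·δ⁻ − 2η·δ⁻), δ⁻ = 2(1−δ) and δ⁺ = 2(1+δ). -/
open RealInnerProductSpace

lemma polar_aux {E : Type*} [NormedAddCommGroup E] [InnerProductSpace ℝ E]
    (s : Finset ℕ) (A : ℕ → E) (k η δ ρ : ℝ) (G : Submodule ℝ E) (hη0 : 0 ≤ η)
    (h1 : 1 - η * (2 * (1 - δ)) ≤ ρ) (h2 : η * (2 * (1 + δ)) - 1 ≤ ρ)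
    (hR : ∀ Z ∈ G, (1 - δ) * ‖Z‖ ^ 2 ≤ k * ∑ j ∈ s, ⟪A j, Z⟫ ^ 2 ∧
      k * ∑ j ∈ s, ⟪A j, Z⟫ ^ 2 ≤ (1 + δ) * ‖Z‖ ^ 2)
    (u z : E) (hu : u ∈ G) (hz : z ∈ G) :
    ⟪u, z⟫ - η * (2 * k * ∑ j ∈ s, ⟪A j, u⟫ * ⟪A j, z⟫) ≤ ρ * ‖u‖ * ‖z‖ := by
  have hadd : ∀ a b : E, a ∈ G → b ∈ G →
      4 * (⟪a, b⟫ - η * (2 * k * ∑ j ∈ s, ⟪A j, a⟫ * ⟪A j, b⟫)) ≤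
        2 * ρ * (‖a‖ ^ 2 + ‖b‖ ^ 2) := by
    intro a b ha hb
    have hp := (hR (a + b) (G.add_mem ha hb)).1
    have hq := (hR (a - b) (G.sub_mem ha hb)).2
    have e : ∑ j ∈ s, ⟪A j, a + b⟫ ^ 2 - ∑ j ∈ s, ⟪A j, a - b⟫ ^ 2
        = 4 * ∑ j ∈ s, ⟪A j, a⟫ * ⟪A j, b⟫ := by
      rw [← Finset.sum_sub_distrib, Finset.mul_sum]
      refine Finset.sum_congr rfl fun j _ => ?_
      rw [inner_add_right, inner_sub_right]; ring
    have ep := norm_add_sq_real a b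
    have em := norm_sub_sq_real a b
    have hp' := mul_le_mul_of_nonneg_left hp hη0
    have hq' := mul_le_mul_of_nonneg_left hq hη0
    have g1 := mul_le_mul_of_nonneg_right h1 (sq_nonneg ‖a + b‖)
    have g2 := mul_le_mul_of_nonneg_right h2 (sq_nonneg ‖a - b‖)
    have e' : η * (2 * k * (4 * ∑ j ∈ s, ⟪A j, a⟫ * ⟪A j, b⟫)) =
        2 * (η * (k * ∑ j ∈ s, ⟪A j, a + b⟫ ^ 2)) - 2 * (η * (k * ∑ j ∈ s, ⟪A j, a - b⟫ ^ 2)) := by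
      rw [← e]; ring
    have e2 : 2 * ρ * (‖a‖ ^ 2 + ‖b‖ ^ 2) = ρ * ‖a + b‖ ^ 2 + ρ * ‖a - b‖ ^ 2 := by
      rw [ep, em]; ring
    have e3 : 4 * ⟪a, b⟫ = ‖a + b‖ ^ 2 - ‖a - b‖ ^ 2 := by rw [ep, em]; ring
    rw [e2]
    linarith
  rcases eq_or_ne u 0 with rfl | hu0
  · simp
  rcases eq_or_ne z 0 with rfl | hz0
  · simp
  have hs := norm_pos_iff.2 hu0
  have ht := norm_pos_iff.2 hz0
  have h := hadd (‖z‖ • u) (‖u‖ • z) (G.smul_mem _ hu) (G.smul_mem _ hz)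
  have e : ∑ j ∈ s, ⟪A j, ‖z‖ • u⟫ * ⟪A j, ‖u‖ • z⟫
      = ‖u‖ * ‖z‖ * ∑ j ∈ s, ⟪A j, u⟫ * ⟪A j, z⟫ := by
    rw [Finset.mul_sum]
    refine Finset.sum_congr rfl fun j _ => ?_
    rw [real_inner_smul_right, real_inner_smul_right]; ring
  rw [e, real_inner_smul_left, real_inner_smul_right, norm_smul, norm_smul, norm_norm,
    norm_norm] at h
  have hst := mul_pos hs ht
  refine le_of_mul_le_mul_left ?_ hst
  nlinarith

lemma inner_grad_aux {E : Type*} [NormedAddCommGroup E] [InnerProductSpace ℝ E]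
    (s : Finset ℕ) (A : ℕ → E) (y : ℕ → ℝ) (k : ℝ) (X Z u : E)
    (hy : ∀ j ∈ s, y j = ⟪A j, X⟫) :
    ⟪u, (2 / k) • ∑ j ∈ s, (⟪A j, Z⟫ - y j) • A j⟫ =
      2 * (1 / k) * ∑ j ∈ s, ⟪A j, u⟫ * ⟪A j, Z - X⟫ := by
  rw [real_inner_smul_right, inner_sum]
  have : ∀ j ∈ s, ⟪u, (⟪A j, Z⟫ - y j) • A j⟫ = ⟪A j, u⟫ * ⟪A j, Z - X⟫ := by
    intro j hj
    rw [real_inner_smul_right, hy j hj, inner_sub_right, real_inner_comm u (A j)]; ring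
  rw [Finset.sum_congr rfl this]; ring

/-- Per-iteration expected contraction of TSVRG: if the measurements are exact at `X*`,
each block SVRG update `Wᵢ = X_t - η(∇fᵢ(X_t) - ∇fᵢ(X̃) + ∇F(X̃))` is thresholded to a
point `X₊ⁱ` at least as close to `Wᵢ` as `X*`, and the relevant subspaces `Γᵢ, Γᵢ'`
(containing the iterates) satisfy the two-sided RIP for both the full operator and the
block operators, then `(1/M) ∑ᵢ ‖X₊ⁱ - X*‖ ≤ θ‖X_t - X*‖ + 2θ‖X̃ - X*‖` with `θ = 2ρ`,
`ρ = √(1 + η²δ⁺δ⁻ - 2ηδ⁻)`, `δ⁻ = 2(1-δ)`, `δ⁺ = 2(1+δ)`. -/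
theorem stmt_12 {E : Type*} [NormedAddCommGroup E] [InnerProductSpace ℝ E]
    [FiniteDimensional ℝ E]
    (m l M : ℕ) (hl : 1 ≤ l) (hM : 1 ≤ M) (hm : m = M * l)
    (A : ℕ → E) (y : ℕ → ℝ) (δ η : ℝ)
    (hδ0 : 0 ≤ δ) (hδ1 : δ < 1) (hη0 : 0 ≤ η) (hη1 : η ≤ 1 / (1 + δ))
    (F : E → ℝ)
    (hF : ∀ Z : E, F Z = (1 / (m : ℝ)) * ∑ i ∈ Finset.Icc 1 m, (y i - ⟪A i, Z⟫) ^ 2)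
    (gradF : E → E)
    (hgradF : ∀ Z : E, gradF Z =
      ((2 : ℝ) / (m : ℝ)) • ∑ i ∈ Finset.Icc 1 m, (⟪A i, Z⟫ - y i) • A i)
    (f : ℕ → E → ℝ)
    (hf : ∀ i : ℕ, ∀ Z : E, f i Z =
      (1 / (l : ℝ)) * ∑ j ∈ Finset.Ioc ((i - 1) * l) (i * l), (y j - ⟪A j, Z⟫) ^ 2)
    (gradf : ℕ → E → E)
    (hgradf : ∀ i : ℕ, ∀ Z : E, gradf i Z =
      ((2 : ℝ) / (l : ℝ)) • ∑ j ∈ Finset.Ioc ((i - 1) * l) (i * l), (⟪A j, Z⟫ - y j) • A j)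
    (Xt Xtil Xstar : E)
    (hy : ∀ j ∈ Finset.Icc 1 m, y j = ⟪A j, Xstar⟫)
    (Xp : ℕ → E) (Γ Γ' : ℕ → Submodule ℝ E)
    (hmem : ∀ i ∈ Finset.Icc 1 M, Xp i ∈ Γ i ∧ Xt ∈ Γ i ∧ Xstar ∈ Γ i)
    (hmem' : ∀ i ∈ Finset.Icc 1 M, Xp i ∈ Γ' i ∧ Xtil ∈ Γ' i ∧ Xstar ∈ Γ' i)
    (hRIP : ∀ i ∈ Finset.Icc 1 M, ∀ Z : E, Z ∈ Γ i ∨ Z ∈ Γ' i →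
      ((1 - δ) * ‖Z‖ ^ 2 ≤ (1 / (m : ℝ)) * ∑ j ∈ Finset.Icc 1 m, ⟪A j, Z⟫ ^ 2 ∧
        (1 / (m : ℝ)) * ∑ j ∈ Finset.Icc 1 m, ⟪A j, Z⟫ ^ 2 ≤ (1 + δ) * ‖Z‖ ^ 2) ∧
      ((1 - δ) * ‖Z‖ ^ 2 ≤
          (1 / (l : ℝ)) * ∑ j ∈ Finset.Ioc ((i - 1) * l) (i * l), ⟪A j, Z⟫ ^ 2 ∧
        (1 / (l : ℝ)) * ∑ j ∈ Finset.Ioc ((i - 1) * l) (i * l), ⟪A j, Z⟫ ^ 2 ≤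
          (1 + δ) * ‖Z‖ ^ 2))
    (W : ℕ → E)
    (hW : ∀ i : ℕ, W i = Xt - η • (gradf i Xt - gradf i Xtil + gradF Xtil))
    (hclose : ∀ i ∈ Finset.Icc 1 M, ‖Xp i - W i‖ ≤ ‖Xstar - W i‖)
    (δm δp ρ θ : ℝ) (hδm : δm = 2 * (1 - δ)) (hδp : δp = 2 * (1 + δ))
    (hρ : ρ = Real.sqrt (1 + η ^ 2 * δp * δm - 2 * η * δm)) (hθ : θ = 2 * ρ) :
    (1 / (M : ℝ)) * ∑ i ∈ Finset.Icc 1 M, ‖Xp i - Xstar‖ ≤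
      θ * ‖Xt - Xstar‖ + 2 * θ * ‖Xtil - Xstar‖ := by
  have hηδ : η * (1 + δ) ≤ 1 := by
    rwa [le_div_iff₀ (by linarith)] at hη1
  have hρ1 : 1 - η * (2 * (1 - δ)) ≤ ρ := by
    rw [hρ]
    apply Real.le_sqrt_of_sq_le
    rw [hδm, hδp]
    nlinarith [mul_nonneg (mul_nonneg (sq_nonneg η) hδ0) (by linarith : 0 ≤ 1 - δ)]
  have hρ2 : η * (2 * (1 + δ)) - 1 ≤ ρ := by
    rw [hρ]
    apply Real.le_sqrt_of_sq_le
    rw [hδm, hδp]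
    nlinarith [mul_nonneg (mul_nonneg hη0 hδ0) (by linarith : 0 ≤ 1 - η * (1 + δ))]
  have hρ0 : 0 ≤ ρ := by rw [hρ]; exact Real.sqrt_nonneg _
  have key : ∀ i ∈ Finset.Icc 1 M, ‖Xp i - Xstar‖ ≤
      θ * ‖Xt - Xstar‖ + 2 * θ * ‖Xtil - Xstar‖ := by
    intro i hi
    obtain ⟨p1, p2, p3⟩ := hmem i hi
    obtain ⟨q1, q2, q3⟩ := hmem' i hi
    have hyi : ∀ j ∈ Finset.Ioc ((i - 1) * l) (i * l), y j = ⟪A j, Xstar⟫ := by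
      intro j hj
      apply hy
      rw [Finset.mem_Ioc] at hj
      rw [Finset.mem_Icc] at hi ⊢
      have := Nat.mul_le_mul_right l hi.2
      constructor
      · omega
      · rw [hm]; omega
    have b1 := polar_aux (Finset.Ioc ((i - 1) * l) (i * l)) A (1 / (l : ℝ)) η δ ρ (Γ i) hη0 hρ1 hρ2
      (fun Z hZ => (hRIP i hi Z (Or.inl hZ)).2) (Xp i - Xstar) (Xt - Xstar)
      ((Γ i).sub_mem p1 p3) ((Γ i).sub_mem p2 p3)
    have b2 := polar_aux (Finset.Ioc ((i - 1) * l) (i * l)) A (1 / (l : ℝ)) η δ ρ (Γ' i) hη0 hρ1 hρ2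
      (fun Z hZ => (hRIP i hi Z (Or.inr hZ)).2) (Xp i - Xstar) (-(Xtil - Xstar))
      ((Γ' i).sub_mem q1 q3) ((Γ' i).neg_mem ((Γ' i).sub_mem q2 q3))
    have b3 := polar_aux (Finset.Icc 1 m) A (1 / (m : ℝ)) η δ ρ (Γ' i) hη0 hρ1 hρ2
      (fun Z hZ => (hRIP i hi Z (Or.inr hZ)).1) (Xp i - Xstar) (Xtil - Xstar)
      ((Γ' i).sub_mem q1 q3) ((Γ' i).sub_mem q2 q3)
    have g1 := inner_grad_aux _ A y (l : ℝ) Xstar Xt (Xp i - Xstar) hyi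
    have g2 := inner_grad_aux _ A y (l : ℝ) Xstar Xtil (Xp i - Xstar) hyi
    have g3 := inner_grad_aux _ A y (m : ℝ) Xstar Xtil (Xp i - Xstar) hy
    rw [← hgradf] at g1 g2
    rw [← hgradF] at g3
    rw [← g1] at b1
    rw [← g3] at b3
    simp only [inner_neg_right, mul_neg, Finset.sum_neg_distrib, norm_neg] at b2
    rw [← g2] at b2
    have hc := hclose i hi
    have hw : ⟪Xp i - Xstar, W i - Xstar⟫ = ⟪Xp i - Xstar, Xt - Xstar⟫ -
        η * (⟪Xp i - Xstar, gradf i Xt⟫ - ⟪Xp i - Xstar, gradf i Xtil⟫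
          + ⟪Xp i - Xstar, gradF Xtil⟫) := by
      rw [hW i, sub_right_comm, inner_sub_right _ (Xt - Xstar), real_inner_smul_right,
        inner_add_right, inner_sub_right _ (gradf i Xt)]
    have hsq : ‖Xp i - Xstar‖ ^ 2 ≤ 2 * ⟪Xp i - Xstar, W i - Xstar⟫ := by
      have e := norm_sub_sq_real (Xp i - Xstar) (W i - Xstar)
      rw [sub_sub_sub_cancel_right] at e
      rw [norm_sub_rev Xstar] at hc
      have := pow_le_pow_left₀ (norm_nonneg _) hc 2
      linarith
    rw [hw] at hsq
    rcases (norm_nonneg (Xp i - Xstar)).eq_or_lt with h0 | h0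
    · rw [← h0, hθ]; positivity
    · refine le_of_mul_le_mul_left ?_ h0
      rw [hθ]
      linarith
  have hs := Finset.sum_le_card_nsmul _ _ _ key
  rw [Nat.card_Icc, Nat.add_sub_cancel, nsmul_eq_mul] at hs
  have hM' : (0 : ℝ) < M := by exact_mod_cast hM
  rw [one_div, inv_mul_le_iff₀ hM']
  exact hs
end
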